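/- For every n ≥ 3, every S ∈ F_n, and every S-admissible set B: the ideal I_B generated by B in C[x1, ..., x_{2n+1}] is a prime ideal; B is an irredundant generating set of I_B (no proper subset of B generates I_B); and the Krull dimension of the quotient ring C[x1, ..., x_{2n+1}]/I_B equals 2n+1−|B|. -/

import Mathlib

open MvPolynomial

/-- The variable `x_i` of `ℂ[x₁,…,x_{2n+1}]`, for `1 ≤ i ≤ 2n+1`
(indices are shifted into `Fin (2n+1)`). -/
noncomputable def xv (n i : ℕ) : MvPolynomial (Fin (2 * n + 1)) ℂ :=
  X ⟨(i - 1) % (2 * n + 1), Nat.mod_lt _ (by omega)⟩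

/-- The polynomial `p_a = x_{a-2} x_{a-1} + x_{a+1} x_{a+2}`. -/
noncomputable def pv (n a : ℕ) : MvPolynomial (Fin (2 * n + 1)) ℂ :=
  xv n (a - 2) * xv n (a - 1) + xv n (a + 1) * xv n (a + 2)

/-- `A'_n = {3, 5, 7, …, 2n−1}`, the odd numbers between `3` and `2n−1`. -/
def Aset' (n : ℕ) : Finset ℕ :=
  (Finset.range (2 * n)).filter (fun a => a % 2 = 1 ∧ 3 ≤ a)

/-- `A_n = A'_n \ {3, 2n−1}`. -/
def Aset (n : ℕ) : Finset ℕ :=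
  (Aset' n).filter (fun a => a ≠ 3 ∧ a ≠ 2 * n - 1)

/-- `S` is a Fibonacci subset of `A'_n`: for every `1 ≤ j ≤ n−2`,
`2j+1 ∈ S` or `2j+3 ∈ S`. -/
def IsFib (n : ℕ) (S : Finset ℕ) : Prop :=
  S ⊆ Aset' n ∧ ∀ j, 1 ≤ j → j ≤ n - 2 → (2 * j + 1 ∈ S ∨ 2 * j + 3 ∈ S)

/-- `U1 = {x_i : i ∈ S}`. -/
noncomputable def U1 (n : ℕ) (S : Finset ℕ) : Finset (MvPolynomial (Fin (2 * n + 1)) ℂ) :=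
  S.image (xv n)

/-- The allowable choices of `U2`. -/
def U2ok (n : ℕ) (S : Finset ℕ) (U : Finset (MvPolynomial (Fin (2 * n + 1)) ℂ)) : Prop :=
  (3 ∉ S ∧ 5 ∈ S ∧ U = {xv n 1, xv n 2}) ∨
  (3 ∈ S ∧ 5 ∈ S ∧ (U = {xv n 1} ∨ U = {xv n 2})) ∨
  (3 ∈ S ∧ 5 ∉ S ∧ U = {pv n 3})

/-- The allowable choices of `U3`. -/
def U3ok (n : ℕ) (S : Finset ℕ) (U : Finset (MvPolynomial (Fin (2 * n + 1)) ℂ)) : Prop :=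
  (2 * n - 1 ∉ S ∧ 2 * n - 3 ∈ S ∧ U = {xv n (2 * n), xv n (2 * n + 1)}) ∨
  (2 * n - 3 ∈ S ∧ 2 * n - 1 ∈ S ∧ (U = {xv n (2 * n)} ∨ U = {xv n (2 * n + 1)})) ∨
  (2 * n - 1 ∈ S ∧ 2 * n - 3 ∉ S ∧ U = {pv n (2 * n - 1)})

/-- The contribution `T_a` to `U4` for `a ∈ A_n`. -/
noncomputable def Tpart (n : ℕ) (S : Finset ℕ) (a : ℕ) :
    Finset (MvPolynomial (Fin (2 * n + 1)) ℂ) :=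
  if a - 2 ∈ S then (if a + 2 ∈ S then ∅ else {xv n (a + 1)})
  else (if a + 2 ∈ S then {xv n (a - 1)} else {pv n a})

/-- `U4 = ⋃_{a ∈ A_n} T_a`. -/
noncomputable def U4 (n : ℕ) (S : Finset ℕ) : Finset (MvPolynomial (Fin (2 * n + 1)) ℂ) :=
  (Aset n).biUnion (Tpart n S)

/-- `B` is an `S`-admissible set: `B = U1 ∪ U2 ∪ U3 ∪ U4` for some allowable `U2, U3`. -/
def IsAdmissible (n : ℕ) (S : Finset ℕ) (B : Finset (MvPolynomial (Fin (2 * n + 1)) ℂ)) :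
    Prop :=
  ∃ U2 U3, U2ok n S U2 ∧ U3ok n S U3 ∧ B = U1 n S ∪ U2 ∪ U3 ∪ U4 n S

/-!
Every element of an admissible set is either a variable or a binomial
`p_a = x_{a-2} x_{a-1} + x_{a+1} x_{a+2}` with `a ∈ S` and `a ± 2 ∉ S`. Such `a` are odd and
pairwise at distance at least `4`, and the variables in `B` occur in none of these binomials.
Hence, adjoining the `p_a` in increasing order of `a`, the variables `x_{a-1}`, `x_{a+1}`,
`x_{a+2}` are new and `x_{a-2}` lies outside the prime ideal `I` already built.

Adjoining `u y + c` to such an `I`, where `y` occurs in none of `u`, `c` and the generators of `I`,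
amounts to solving for `y`: if `u ∉ I` and `c` is a nonzerodivisor modulo `I + (u)`, then
`I + (u y + c)` is the kernel of the map to the fraction field of the quotient by `I` that sends `y`
to `-c / u`. So the ideal stays prime, and its height grows by one with each generator.

Therefore `I_B` is a prime of height at least `|B|`. By Krull's height theorem no fewer elements
generate it, and comparison with the height of the ideal of the origin gives the dimension.
-/

section PrimeCompleteIntersection

variable {R : Type*} [CommRing R]

/-- A set generating a prime ideal whose height is the number of generators. Only the inequality
`encard_le_height` is recorded: in a Noetherian ring the opposite one is Krull's height theorem. -/
structure IsPrimeCompleteIntersection (s : Set R) : Prop where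
  isPrime : (Ideal.span s).IsPrime
  encard_le_height : s.encard ≤ (Ideal.span s).height

namespace IsPrimeCompleteIntersection

variable {s : Set R}

theorem empty [IsDomain R] : IsPrimeCompleteIntersection (∅ : Set R) where
  isPrime := by simpa only [Ideal.span_empty] using Ideal.isPrime_bot
  encard_le_height := by simp only [Set.encard_empty, zero_le]

theorem insert_of_notMem (hs : IsPrimeCompleteIntersection s) {f : R} (hf : f ∉ Ideal.span s)
    (hprime : (Ideal.span (insert f s)).IsPrime) : IsPrimeCompleteIntersection (insert f s) where
  isPrime := hprime
  encard_le_height := by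
    have := hs.isPrime
    have hlt : Ideal.span s < Ideal.span (insert f s) :=
      (Ideal.span_mono (Set.subset_insert f s)).lt_of_not_ge fun h ↦
        hf (h (Ideal.subset_span (Set.mem_insert f s)))
    calc (insert f s).encard ≤ s.encard + 1 := Set.encard_insert_le s f
      _ ≤ (Ideal.span s).height + 1 := by gcongr; exact hs.encard_le_height
      _ ≤ _ := Ideal.height_add_one_le_of_lt_of_isPrime hlt

theorem span_ne_of_ssubset [IsNoetherianRing R] {s t : Finset R}
    (hs : IsPrimeCompleteIntersection (s : Set R)) (hts : t ⊂ s) :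
    Ideal.span (t : Set R) ≠ Ideal.span (s : Set R) := by
  intro hspan
  have := hs.isPrime
  have hheight : (Ideal.span (s : Set R)).height ≤ t.card :=
    Ideal.height_le_card_of_mem_minimalPrimes_span_finset <| by
      rw [hspan, Ideal.minimalPrimes_eq_subsingleton_self, Set.mem_singleton_iff]
  have hcard : (s.card : ℕ∞) ≤ t.card := by
    simpa only [Set.encard_coe_eq_coe_finsetCard] using hs.encard_le_height.trans hheight
  exact (Finset.card_lt_card hts).not_ge (by exact_mod_cast hcard)

end IsPrimeCompleteIntersection

theorem ringKrullDim_quotient_add_height_le (p : Ideal R) [hp : p.IsPrime] :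
    ringKrullDim (R ⧸ p) + p.height ≤ ringKrullDim R := by
  let P : PrimeSpectrum R := ⟨p, hp⟩
  have hlocus : PrimeSpectrum.zeroLocus (p : Set R) = Set.Ici P := by
    ext Q
    exact PrimeSpectrum.mem_zeroLocus Q p
  have : Nonempty (PrimeSpectrum R) := ⟨P⟩
  rw [ringKrullDim_quotient, hlocus, ← Order.coheight_eq_krullDim_Ici,
    show p.height = Order.height P from P.height_eq_orderHeight, ringKrullDim,
    Order.krullDim_eq_iSup_height_add_coheight_of_nonempty, add_comm]
  exact_mod_cast le_iSup (fun Q : PrimeSpectrum R ↦ Order.height Q + Order.coheight Q) P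

theorem mem_span_insert_of_mul_mem {G : Set R} {u c : R}
    (hu : ∀ f, u * f ∈ Ideal.span G → f ∈ Ideal.span G)
    (hc : ∀ f, c * f ∈ Ideal.span (insert u G) → f ∈ Ideal.span (insert u G)) (y : R) {f : R}
    (hf : u * f ∈ Ideal.span (insert (u * y + c) G)) :
    f ∈ Ideal.span (insert (u * y + c) G) := by
  obtain ⟨h, i, hi, hfhi⟩ := Ideal.mem_span_insert.1 hf
  obtain ⟨k, j, hj, hhkj⟩ : ∃ k, ∃ j ∈ Ideal.span G, h = k * u + j := by
    refine Ideal.mem_span_insert.1 (hc h (Ideal.mem_span_insert.2 ⟨f - h * y, -i, neg_mem hi, ?_⟩))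
    linear_combination -hfhi
  have hfk : f - k * (u * y + c) ∈ Ideal.span G := by
    refine hu _ ?_
    have : u * (f - k * (u * y + c)) = (u * y + c) * j + i := by
      linear_combination hfhi + (u * y + c) * hhkj
    rw [this]
    exact add_mem (Ideal.mul_mem_left _ _ hj) hi
  exact Ideal.mem_span_insert.2 ⟨k, _, hfk, by ring⟩

theorem mem_span_insert_of_pow_mul_mem {G : Set R} {u c : R}
    (hu : ∀ f, u * f ∈ Ideal.span G → f ∈ Ideal.span G)
    (hc : ∀ f, c * f ∈ Ideal.span (insert u G) → f ∈ Ideal.span (insert u G)) (y : R) (N : ℕ)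
    {f : R} (hf : u ^ N * f ∈ Ideal.span (insert (u * y + c) G)) :
    f ∈ Ideal.span (insert (u * y + c) G) := by
  induction N with
  | zero => simpa only [pow_zero, one_mul] using hf
  | succ N ih =>
    rw [pow_succ', mul_assoc] at hf
    exact ih (mem_span_insert_of_mul_mem hu hc y hf)

end PrimeCompleteIntersection

section FreshVariable

variable {σ R : Type*} [CommRing R] {y : σ} {G : Set (MvPolynomial σ R)}

theorem divMonomial_single_mul_of_mem_supported {g : MvPolynomial σ R}
    (hg : g ∈ supported R {y}ᶜ) (f : MvPolynomial σ R) :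
    (g * f).divMonomial (Finsupp.single y 1) = g * f.divMonomial (Finsupp.single y 1) := by
  classical
  induction hg using Algebra.adjoin_induction generalizing f with
  | mem g hg =>
    obtain ⟨i, hi, rfl⟩ := hg
    ext m
    have hmem : i ∈ (Finsupp.single y 1 + m).support ↔ i ∈ m.support := by
      simp [Finsupp.single_eq_of_ne hi]
    simp only [coeff_divMonomial, coeff_X_mul', hmem]
    split_ifs with him
    · rw [add_tsub_assoc_of_le]
      simpa [Nat.one_le_iff_ne_zero] using him
    · rfl
  | algebraMap r => ext m; simp [algebraMap_eq]
  | add p q _ _ hp hq => simp only [add_mul, add_divMonomial, hp, hq]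
  | mul p q _ _ hp hq => simp only [mul_assoc, hp, hq]

theorem mem_span_of_X_mul_mem (hG : G ⊆ supported R {y}ᶜ) {f : MvPolynomial σ R}
    (hf : X y * f ∈ Ideal.span G) : f ∈ Ideal.span G := by
  have hdiv : ∀ p ∈ Ideal.span G, p.divMonomial (Finsupp.single y 1) ∈ Ideal.span G := by
    intro p hp
    induction hp using Submodule.closure_induction with
    | zero => simp only [zero_divMonomial, zero_mem]
    | add p q _ _ hp hq => simpa only [add_divMonomial] using add_mem hp hq
    | smul_mem a g hg =>
      rw [smul_eq_mul, mul_comm, divMonomial_single_mul_of_mem_supported (hG hg)]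
      exact Ideal.mul_mem_right _ _ (Ideal.subset_span hg)
  simpa only [X_mul_divMonomial] using hdiv _ hf

theorem exists_algHom_X_eq_and_eqOn_supported {A : Type*} [CommRing A] [Algebra R A]
    (φ : MvPolynomial σ R →ₐ[R] A) (y : σ) (a : A) :
    ∃ ψ : MvPolynomial σ R →ₐ[R] A, ψ (X y) = a ∧ Set.EqOn ψ φ (supported R {y}ᶜ) := by
  classical
  refine ⟨aeval (Function.update (fun i ↦ φ (X i)) y a), by simp, ?_⟩
  refine AlgHom.adjoin_le_equalizer _ _ ?_
  rintro _ ⟨i, hi, rfl⟩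
  rw [aeval_X, Function.update_of_ne hi]

theorem mem_span_of_mul_X_add_mem (hG : G ⊆ supported R {y}ᶜ) {u c : MvPolynomial σ R}
    (hu : u ∈ supported R {y}ᶜ) (hc : c ∈ supported R {y}ᶜ)
    (h : u * X y + c ∈ Ideal.span G) : u ∈ Ideal.span G := by
  have heval : ∀ a, u * a + c ∈ Ideal.span G := by
    intro a
    obtain ⟨ψ, hψy, hψ⟩ := exists_algHom_X_eq_and_eqOn_supported (AlgHom.id R _) y a
    have hmap : (Ideal.span G).map ψ ≤ Ideal.span G := by
      rw [Ideal.map_span, Set.image_congr fun g hg ↦ hψ (hG hg)]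
      simp
    simpa [hψ hu, hψ hc, hψy] using hmap (Ideal.mem_map_of_mem ψ h)
  simpa using sub_mem (heval 1) (heval 0)

theorem exists_pow_mul_sub_mem_span {u c : MvPolynomial σ R} (hu : u ∈ supported R {y}ᶜ)
    (hc : c ∈ supported R {y}ᶜ) (f : MvPolynomial σ R) :
    ∃ N : ℕ, ∃ g ∈ supported R {y}ᶜ, u ^ N * f - g ∈ Ideal.span {u * X y + c} := by
  simp only [Ideal.mem_span_singleton]
  induction f using MvPolynomial.induction_on with
  | C r => exact ⟨0, C r, (supported R {y}ᶜ).algebraMap_mem r, by simp⟩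
  | add p q hp hq =>
    obtain ⟨N, g, hg, a, hga⟩ := hp
    obtain ⟨M, h, hh, b, hhb⟩ := hq
    refine ⟨N + M, u ^ M * g + u ^ N * h,
      add_mem (mul_mem (pow_mem hu M) hg) (mul_mem (pow_mem hu N) hh), u ^ M * a + u ^ N * b, ?_⟩
    linear_combination u ^ M * hga + u ^ N * hhb
  | mul_X p i hp =>
    obtain ⟨N, g, hg, a, hga⟩ := hp
    by_cases hi : i = y
    · subst hi
      exact ⟨N + 1, -c * g, mul_mem (neg_mem hc) hg, u * X i * a + g,
        by linear_combination u * X i * hga⟩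
    · exact ⟨N, g * X i, mul_mem hg (Algebra.subset_adjoin ⟨i, hi, rfl⟩), a * X i,
        by linear_combination X i * hga⟩

theorem isPrime_span_insert_mul_X_add (hG : G ⊆ supported R {y}ᶜ)
    (hprime : (Ideal.span G).IsPrime) {u c : MvPolynomial σ R} (hu : u ∈ supported R {y}ᶜ)
    (hc : c ∈ supported R {y}ᶜ) (huG : u ∉ Ideal.span G)
    (hreg : ∀ f, c * f ∈ Ideal.span (insert u G) → f ∈ Ideal.span (insert u G)) :
    (Ideal.span (insert (u * X y + c) G)).IsPrime := by
  let K := FractionRing (MvPolynomial σ R ⧸ Ideal.span G)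
  let φ : MvPolynomial σ R →ₐ[R] K :=
    (IsScalarTower.toAlgHom R (MvPolynomial σ R ⧸ Ideal.span G) K).comp
      (Ideal.Quotient.mkₐ R (Ideal.span G))
  have hφ : ∀ f, φ f = 0 ↔ f ∈ Ideal.span G := fun f ↦ by
    simp [φ, K, Ideal.Quotient.eq_zero_iff_mem]
  obtain ⟨ψ, hψy, hψ⟩ := exists_algHom_X_eq_and_eqOn_supported φ y (-φ c / φ u)
  have hle : Ideal.span (insert (u * X y + c) G) ≤ RingHom.ker ψ := by
    refine Ideal.span_le.2 (Set.insert_subset ?_ fun g hg ↦ ?_)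
    · have : φ u ≠ 0 := fun h ↦ huG ((hφ u).1 h)
      simp only [SetLike.mem_coe, RingHom.mem_ker, map_add, map_mul, hψ hu, hψ hc, hψy]
      rw [mul_div_cancel₀ _ this, neg_add_cancel]
    · exact (hψ (hG hg)).trans ((hφ g).2 (Ideal.subset_span hg))
  have hker : RingHom.ker ψ ≤ Ideal.span (insert (u * X y + c) G) := by
    intro f hf
    obtain ⟨N, g, hg, hfg⟩ := exists_pow_mul_sub_mem_span hu hc f
    have hfg' : u ^ N * f - g ∈ Ideal.span (insert (u * X y + c) G) :=
      Ideal.span_mono (Set.singleton_subset_iff.2 (Set.mem_insert _ _)) hfg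
    have hgG : g ∈ Ideal.span G := by
      rw [← hφ, ← hψ hg]
      have := hle hfg'
      rw [RingHom.mem_ker] at hf this
      simpa [hf] using this
    refine mem_span_insert_of_pow_mul_mem
      (fun _ h ↦ (hprime.mem_or_mem h).resolve_left huG) hreg (X y) N ?_
    rw [← sub_add_cancel (u ^ N * f) g]
    exact add_mem hfg' (Ideal.span_mono (Set.subset_insert _ _) hgG)
  rw [le_antisymm hle hker]
  exact RingHom.ker_isPrime ψ

end FreshVariable

section MvPolynomialCompleteIntersection

variable {σ R : Type*} [CommRing R] {G : Set (MvPolynomial σ R)}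

theorem X_mem_supported_compl_singleton {i j : σ} (hij : i ≠ j) :
    (X i : MvPolynomial σ R) ∈ supported R {j}ᶜ :=
  Algebra.subset_adjoin ⟨i, hij, rfl⟩

theorem X_notMem_span_of_subset [Nontrivial R] {i : σ}
    (hG : G ⊆ Ideal.span (X '' {i}ᶜ : Set (MvPolynomial σ R))) :
    (X i : MvPolynomial σ R) ∉ Ideal.span G := by
  intro hi
  have := mem_ideal_span_X_image.1 (Ideal.span_le.2 hG hi) (Finsupp.single i 1)
    (by simp [support_X])
  obtain ⟨j, hji, hj⟩ := this
  exact hj (Finsupp.single_eq_of_ne hji)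

namespace IsPrimeCompleteIntersection

theorem insert_mul_X_add (hG : IsPrimeCompleteIntersection G) {y : σ}
    (hGy : G ⊆ supported R {y}ᶜ) {u c : MvPolynomial σ R} (hu : u ∈ supported R {y}ᶜ)
    (hc : c ∈ supported R {y}ᶜ) (huG : u ∉ Ideal.span G)
    (hreg : ∀ f, c * f ∈ Ideal.span (insert u G) → f ∈ Ideal.span (insert u G)) :
    IsPrimeCompleteIntersection (insert (u * X y + c) G) :=
  hG.insert_of_notMem (fun h ↦ huG (mem_span_of_mul_X_add_mem hGy hu hc h))
    (isPrime_span_insert_mul_X_add hGy hG.isPrime hu hc huG hreg)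

theorem insert_X (hG : IsPrimeCompleteIntersection G) {y : σ} (hGy : G ⊆ supported R {y}ᶜ) :
    IsPrimeCompleteIntersection (insert (X y) G) := by
  have htop : Ideal.span (insert 1 G) = ⊤ :=
    (Ideal.eq_top_iff_one _).2 (Ideal.subset_span (Set.mem_insert 1 G))
  simpa using hG.insert_mul_X_add hGy (one_mem _) (zero_mem _)
    ((Ideal.ne_top_iff_one _).1 hG.isPrime.ne_top) fun f _ ↦ htop ▸ Submodule.mem_top

theorem insert_binomial (hG : IsPrimeCompleteIntersection G) {u y z v : σ}
    (hGy : G ⊆ supported R {y}ᶜ) (hGz : G ⊆ supported R {z}ᶜ) (hGv : G ⊆ supported R {v}ᶜ)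
    (huG : X u ∉ Ideal.span G) (huy : u ≠ y) (huz : u ≠ z) (huv : u ≠ v) (hzy : z ≠ y)
    (hvy : v ≠ y) : IsPrimeCompleteIntersection (insert (X u * X y + X z * X v) G) := by
  refine hG.insert_mul_X_add hGy (X_mem_supported_compl_singleton huy)
    (mul_mem (X_mem_supported_compl_singleton hzy) (X_mem_supported_compl_singleton hvy)) huG ?_
  intro f hf
  rw [mul_assoc] at hf
  have huGz := Set.insert_subset (X_mem_supported_compl_singleton huz) hGz
  have huGv := Set.insert_subset (X_mem_supported_compl_singleton huv) hGv
  exact mem_span_of_X_mul_mem huGv (mem_span_of_X_mul_mem huGz hf)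

variable (R) in
theorem image_X [IsDomain R] (s : Finset σ) :
    IsPrimeCompleteIntersection (X '' s : Set (MvPolynomial σ R)) := by
  classical
  induction s using Finset.induction_on with
  | empty => simpa only [Finset.coe_empty, Set.image_empty] using empty
  | insert y s hy ih =>
    rw [Finset.coe_insert, Set.image_insert_eq]
    refine ih.insert_X ?_
    rintro _ ⟨i, hi, rfl⟩
    exact X_mem_supported_compl_singleton fun hiy ↦ hy (hiy ▸ hi)

variable (σ R) in
theorem range_X [IsDomain R] [Finite σ] :
    IsPrimeCompleteIntersection (Set.range X : Set (MvPolynomial σ R)) := by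
  have := Fintype.ofFinite σ
  simpa only [Finset.coe_univ, Set.image_univ] using image_X R (Finset.univ : Finset σ)

theorem ringKrullDim_quotient_add_card {k : Type*} [Field k] [Finite σ]
    {B : Finset (MvPolynomial σ k)} (hB : IsPrimeCompleteIntersection (B : Set (MvPolynomial σ k)))
    (hvars : (B : Set (MvPolynomial σ k)) ⊆ idealOfVars σ k) :
    ringKrullDim (MvPolynomial σ k ⧸ Ideal.span (B : Set (MvPolynomial σ k))) + B.card =
      Nat.card σ := by
  have := hB.isPrime
  have hBcard : (B.card : ℕ∞) ≤ (Ideal.span (B : Set (MvPolynomial σ k))).height := by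
    simpa only [Set.encard_coe_eq_coe_finsetCard] using hB.encard_le_height
  have hX := range_X σ k
  have := hX.isPrime
  have hXcard : (Nat.card σ : ℕ∞) ≤ (idealOfVars σ k).height := by
    rw [← ENat.card_eq_coe_natCard]
    exact X_injective.encard_range.trans hX.encard_le_height
  apply le_antisymm
  · calc _ ≤ ringKrullDim (MvPolynomial σ k ⧸ Ideal.span (B : Set (MvPolynomial σ k))) +
          (Ideal.span (B : Set (MvPolynomial σ k))).height := by gcongr; exact_mod_cast hBcard
      _ ≤ ringKrullDim (MvPolynomial σ k) := ringKrullDim_quotient_add_height_le _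
      _ = Nat.card σ := by
        rw [ringKrullDim_of_isNoetherianRing, ringKrullDim_eq_zero_of_field, zero_add]
  · calc (Nat.card σ : WithBot ℕ∞) ≤ (idealOfVars σ k).height := by exact_mod_cast hXcard
      _ ≤ _ := by
        have := Ideal.height_le_ringKrullDim_quotient_add_encard (B : Set (MvPolynomial σ k)) hvars
        rw [Set.encard_coe_eq_coe_finsetCard] at this
        exact_mod_cast this

theorem ringKrullDim_quotient_eq {k : Type*} [Field k] [Finite σ]
    {B : Finset (MvPolynomial σ k)} (hB : IsPrimeCompleteIntersection (B : Set (MvPolynomial σ k)))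
    (hvars : (B : Set (MvPolynomial σ k)) ⊆ idealOfVars σ k) :
    ringKrullDim (MvPolynomial σ k ⧸ Ideal.span (B : Set (MvPolynomial σ k))) =
      (Nat.card σ - B.card : ℕ) := by
  have := hB.isPrime
  have hdim := hB.ringKrullDim_quotient_add_card hvars
  have hcard : B.card ≤ Nat.card σ := by
    have := le_add_of_nonneg_left (a := (B.card : WithBot ℕ∞)) (ringKrullDim_nonneg_of_nontrivial
      (R := MvPolynomial σ k ⧸ Ideal.span (B : Set (MvPolynomial σ k))))
    exact_mod_cast this.trans_eq hdim
  rw [← ENat.WithBot.add_natCast_cancel (c := B.card), hdim, ← Nat.cast_add,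
    Nat.sub_add_cancel hcard]

end IsPrimeCompleteIntersection

end MvPolynomialCompleteIntersection

section Admissible

variable {n : ℕ} {S : Finset ℕ}

/-- The 0-based index of the variable `x_i`, so that `xv n i = X (varIndex n i)` holds by `rfl`. -/
def varIndex (n i : ℕ) : Fin (2 * n + 1) :=
  ⟨(i - 1) % (2 * n + 1), Nat.mod_lt _ (by omega)⟩

theorem varIndex_ne {i j : ℕ} (hi : i ∈ Finset.Icc 1 (2 * n + 1))
    (hj : j ∈ Finset.Icc 1 (2 * n + 1)) (hij : i ≠ j) : varIndex n i ≠ varIndex n j := by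
  rw [Finset.mem_Icc] at hi hj
  rw [varIndex, varIndex, Ne, Fin.mk.injEq, Nat.mod_eq_of_lt (by omega),
    Nat.mod_eq_of_lt (by omega)]
  omega

/-- The indices of the four variables occurring in `p_a`. -/
def binomialSupport (a : ℕ) : Finset ℕ := {a - 2, a - 1, a + 1, a + 2}

/-- The elements of `S` with neither neighbour in `S`; their `p_a` are the binomials that can occur
in an `S`-admissible set. -/
def isolated (S : Finset ℕ) : Finset ℕ :=
  S.filter fun a ↦ a - 2 ∉ S ∧ a + 2 ∉ S

/-- The indices of the variables of `ℂ[x₁,…,x_{2n+1}]` that occur in no `p_a` with `a` isolated. -/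
def freeIndices (n : ℕ) (S : Finset ℕ) : Finset ℕ :=
  (Finset.Icc 1 (2 * n + 1)).filter fun i ↦ ∀ a ∈ isolated S, i ∉ binomialSupport a

theorem mem_binomialSupport {i a : ℕ} :
    i ∈ binomialSupport a ↔ i = a - 2 ∨ i = a - 1 ∨ i = a + 1 ∨ i = a + 2 := by
  simp only [binomialSupport, Finset.mem_insert, Finset.mem_singleton]

theorem mem_isolated {a : ℕ} : a ∈ isolated S ↔ a ∈ S ∧ a - 2 ∉ S ∧ a + 2 ∉ S :=
  Finset.mem_filter

theorem mem_Aset' {a : ℕ} : a ∈ Aset' n ↔ a < 2 * n ∧ a % 2 = 1 ∧ 3 ≤ a := by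
  rw [Aset', Finset.mem_filter, Finset.mem_range]

theorem add_four_le_of_mem_isolated (hS : S ⊆ Aset' n) {a b : ℕ} (ha : a ∈ isolated S)
    (hb : b ∈ isolated S) (hab : a < b) : a + 4 ≤ b := by
  rw [mem_isolated] at ha hb
  have ha' := mem_Aset'.1 (hS ha.1)
  have hb' := mem_Aset'.1 (hS hb.1)
  have : b ≠ a + 2 := fun h ↦ ha.2.2 (h ▸ hb.1)
  omega

theorem xv_mem_supported {i j : ℕ} (hi : i ∈ Finset.Icc 1 (2 * n + 1))
    (hj : j ∈ Finset.Icc 1 (2 * n + 1)) (hij : i ≠ j) :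
    xv n i ∈ supported ℂ {varIndex n j}ᶜ :=
  X_mem_supported_compl_singleton (varIndex_ne hi hj hij)

theorem binomialSupport_subset {a : ℕ} (ha : a ∈ Aset' n) :
    binomialSupport a ⊆ Finset.Icc 1 (2 * n + 1) := by
  intro i hi
  rw [mem_binomialSupport] at hi
  rw [mem_Aset'] at ha
  rw [Finset.mem_Icc]
  omega

section Generators

variable {I P : Finset ℕ} {j : ℕ}

theorem generators_subset_supported (hI : I ⊆ Finset.Icc 1 (2 * n + 1)) (hP : P ⊆ Aset' n)
    (hj : j ∈ Finset.Icc 1 (2 * n + 1)) (hjI : j ∉ I) (hjP : ∀ a ∈ P, j ∉ binomialSupport a) :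
    xv n '' I ∪ pv n '' P ⊆ (supported ℂ {varIndex n j}ᶜ : Set _) := by
  rintro _ (⟨i, hi, rfl⟩ | ⟨a, ha, rfl⟩)
  · exact xv_mem_supported (hI hi) hj fun h ↦ hjI (h ▸ hi)
  · have hmem : ∀ i ∈ binomialSupport a, xv n i ∈ supported ℂ {varIndex n j}ᶜ := fun i hi ↦
      xv_mem_supported (binomialSupport_subset (hP ha) hi) hj fun h ↦ hjP a ha (h ▸ hi)
    simp only [mem_binomialSupport, forall_eq_or_imp, forall_eq] at hmem
    obtain ⟨h₁, h₂, h₃, h₄⟩ := hmem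
    exact add_mem (mul_mem h₁ h₂) (mul_mem h₃ h₄)

theorem xv_notMem_span_generators (hI : I ⊆ Finset.Icc 1 (2 * n + 1)) (hP : P ⊆ Aset' n)
    (hj : j ∈ Finset.Icc 1 (2 * n + 1)) (hjI : j ∉ I) (hjP : ∀ a ∈ P, a + 2 ≤ j) :
    xv n j ∉ Ideal.span (xv n '' I ∪ pv n '' P) := by
  have hmem : ∀ i ∈ Finset.Icc 1 (2 * n + 1), i ≠ j →
      xv n i ∈ Ideal.span (X '' {varIndex n j}ᶜ) := fun i hi hij ↦
    Ideal.subset_span ⟨varIndex n i, varIndex_ne hi hj hij, rfl⟩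
  refine X_notMem_span_of_subset ?_
  rintro _ (⟨i, hi, rfl⟩ | ⟨a, ha, rfl⟩)
  · exact hmem i (hI hi) fun h ↦ hjI (h ▸ hi)
  · have haj := hjP a ha
    have hmem_support : ∀ i ∈ binomialSupport a, i < j →
        xv n i ∈ Ideal.span (X '' {varIndex n j}ᶜ) := fun i hi hij ↦
      hmem i (binomialSupport_subset (hP ha) hi) hij.ne
    simp only [mem_binomialSupport, forall_eq_or_imp, forall_eq] at hmem_support
    exact add_mem (Ideal.mul_mem_left _ _ (hmem_support.2.1 (by omega)))
      (Ideal.mul_mem_right _ _ (hmem_support.2.2.1 (by omega)))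

theorem IsPrimeCompleteIntersection.insert_pv {a : ℕ} (hI : I ⊆ Finset.Icc 1 (2 * n + 1))
    (hP : P ⊆ Aset' n) (ha : a ∈ Aset' n) (hIa : Disjoint (binomialSupport a) I)
    (hPa : ∀ b ∈ P, b + 4 ≤ a)
    (hprime : IsPrimeCompleteIntersection (xv n '' I ∪ pv n '' P)) :
    IsPrimeCompleteIntersection (insert (pv n a) (xv n '' I ∪ pv n '' P)) := by
  have h3 : 3 ≤ a := (mem_Aset'.1 ha).2.2
  have hsub : a - 2 ∈ binomialSupport a ∧ a - 1 ∈ binomialSupport a ∧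
      a + 1 ∈ binomialSupport a ∧ a + 2 ∈ binomialSupport a := by
    simp [binomialSupport]
  obtain ⟨hu, hy, hz, hv⟩ := hsub
  have hne : ∀ {i j}, i ∈ binomialSupport a → j ∈ binomialSupport a → i ≠ j →
      varIndex n i ≠ varIndex n j := fun hi hj ↦
    varIndex_ne (binomialSupport_subset ha hi) (binomialSupport_subset ha hj)
  have hfresh : ∀ j ∈ binomialSupport a, a - 2 < j →
      xv n '' I ∪ pv n '' P ⊆ (supported ℂ {varIndex n j}ᶜ : Set _) := by
    intro j hj haj
    refine generators_subset_supported hI hP (binomialSupport_subset ha hj)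
      (Finset.disjoint_left.1 hIa hj) fun b hb ↦ ?_
    have := hPa b hb
    rw [mem_binomialSupport]
    omega
  have hua : xv n (a - 2) ∉ Ideal.span (xv n '' I ∪ pv n '' P) :=
    xv_notMem_span_generators hI hP (binomialSupport_subset ha hu)
      (Finset.disjoint_left.1 hIa hu) fun b hb ↦ by have := hPa b hb; omega
  exact hprime.insert_binomial (hfresh _ hy (by omega)) (hfresh _ hz (by omega))
    (hfresh _ hv (by omega)) hua (hne hu hy (by omega)) (hne hu hz (by omega))
    (hne hu hv (by omega)) (hne hz hy (by omega)) (hne hv hy (by omega))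

theorem isPrimeCompleteIntersection_generators (hI : I ⊆ Finset.Icc 1 (2 * n + 1))
    (hP : P ⊆ Aset' n) (hIP : ∀ a ∈ P, Disjoint (binomialSupport a) I)
    (hsep : ∀ a ∈ P, ∀ b ∈ P, a < b → a + 4 ≤ b) :
    IsPrimeCompleteIntersection (xv n '' I ∪ pv n '' P) := by
  induction P using Finset.induction_on_max with
  | empty =>
    have := IsPrimeCompleteIntersection.image_X ℂ (I.image (varIndex n))
    rw [Finset.coe_image, Set.image_image] at this
    rwa [Finset.coe_empty, Set.image_empty, Set.union_empty]
  | insert a P hmax ih =>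
    simp only [Finset.forall_mem_insert] at hIP hsep
    rw [Finset.insert_subset_iff] at hP
    rw [Finset.coe_insert, Set.image_insert_eq, Set.union_insert]
    exact .insert_pv hI hP.2 hP.1 hIP.1 (fun b hb ↦ (hsep.2 b hb).1 (hmax b hb))
      (ih hP.2 hIP.2 fun b hb ↦ (hsep.2 b hb).2)

end Generators

/-- The variables and binomials from which every `S`-admissible set is taken. -/
def generatorPool (n : ℕ) (S : Finset ℕ) : Set (MvPolynomial (Fin (2 * n + 1)) ℂ) :=
  xv n '' freeIndices n S ∪ pv n '' isolated S

theorem xv_mem_generatorPool {i : ℕ} (hi : i ∈ Finset.Icc 1 (2 * n + 1))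
    (hfree : ∀ a ∈ S, a - 2 ∉ S → a + 2 ∉ S → i ∉ binomialSupport a) :
    xv n i ∈ generatorPool n S := by
  refine .inl ⟨i, Finset.mem_filter.2 ⟨hi, fun a ha ↦ ?_⟩, rfl⟩
  obtain ⟨haS, hl, hr⟩ := mem_isolated.1 ha
  exact hfree a haS hl hr

theorem pv_mem_generatorPool {a : ℕ} (ha : a ∈ S) (hl : a - 2 ∉ S) (hr : a + 2 ∉ S) :
    pv n a ∈ generatorPool n S :=
  .inr ⟨a, mem_isolated.2 ⟨ha, hl, hr⟩, rfl⟩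

theorem U1_subset_generatorPool (hS : S ⊆ Aset' n) : (U1 n S : Set _) ⊆ generatorPool n S := by
  intro f hf
  obtain ⟨i, hi, rfl⟩ := Finset.mem_image.1 hf
  have hi' := mem_Aset'.1 (hS hi)
  refine xv_mem_generatorPool (Finset.mem_Icc.2 (by omega)) fun a haS hl hr hia ↦ ?_
  have ha' := mem_Aset'.1 (hS haS)
  have hil : i ≠ a - 2 := fun h ↦ hl (h ▸ hi)
  have hir : i ≠ a + 2 := fun h ↦ hr (h ▸ hi)
  rw [mem_binomialSupport] at hia
  omega

theorem U2ok.subset_generatorPool (hS : S ⊆ Aset' n) {U : Finset (MvPolynomial (Fin (2 * n + 1)) ℂ)}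
    (hU : U2ok n S U) : (U : Set _) ⊆ generatorPool n S := by
  have hx : 5 ∈ S → xv n 1 ∈ generatorPool n S ∧ xv n 2 ∈ generatorPool n S := by
    intro h5
    have h5' := mem_Aset'.1 (hS h5)
    constructor
    all_goals
      refine xv_mem_generatorPool (Finset.mem_Icc.2 (by omega)) fun a haS hl hr hia ↦ ?_
      have ha' := mem_Aset'.1 (hS haS)
      have ha3 : a ≠ 3 := by rintro rfl; exact hr h5
      rw [mem_binomialSupport] at hia
      omega
  rcases hU with ⟨-, h5, rfl⟩ | ⟨-, h5, rfl | rfl⟩ | ⟨h3, h5, rfl⟩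
  · simpa [Set.insert_subset_iff] using hx h5
  · simpa using (hx h5).1
  · simpa using (hx h5).2
  · simpa using pv_mem_generatorPool h3 (fun h1 ↦ by simpa using mem_Aset'.1 (hS h1)) h5

theorem U3ok.subset_generatorPool (hS : S ⊆ Aset' n) {U : Finset (MvPolynomial (Fin (2 * n + 1)) ℂ)}
    (hU : U3ok n S U) : (U : Set _) ⊆ generatorPool n S := by
  have hx : 2 * n - 3 ∈ S →
      xv n (2 * n) ∈ generatorPool n S ∧ xv n (2 * n + 1) ∈ generatorPool n S := by
    intro h
    have h' := mem_Aset'.1 (hS h)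
    constructor
    all_goals
      refine xv_mem_generatorPool (Finset.mem_Icc.2 (by omega)) fun a haS hl _ hia ↦ ?_
      have ha' := mem_Aset'.1 (hS haS)
      have hlast : a - 2 ≠ 2 * n - 3 := fun h'' ↦ hl (h'' ▸ h)
      rw [mem_binomialSupport] at hia
      omega
  rcases hU with ⟨-, h, rfl⟩ | ⟨h, -, rfl | rfl⟩ | ⟨h, h', rfl⟩
  · simpa [Set.insert_subset_iff] using hx h
  · simpa using (hx h).1
  · simpa using (hx h).2
  · have hl : 2 * n - 1 - 2 ∉ S := by rwa [Nat.sub_sub]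
    have hr : 2 * n - 1 + 2 ∉ S := fun hr ↦ by have := mem_Aset'.1 (hS hr); omega
    simpa using pv_mem_generatorPool h hl hr

theorem IsFib.Tpart_subset_generatorPool (hS : IsFib n S) {c : ℕ} (hc : c ∈ Aset n) :
    (Tpart n S c : Set _) ⊆ generatorPool n S := by
  obtain ⟨hSA, hFib⟩ := hS
  rw [Aset, Finset.mem_filter, mem_Aset'] at hc
  unfold Tpart
  split_ifs with hl hr hr
  · simp
  all_goals rw [Finset.coe_singleton, Set.singleton_subset_iff]
  · refine xv_mem_generatorPool (Finset.mem_Icc.2 (by omega)) fun a haS hal har hia ↦ ?_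
    have ha' := mem_Aset'.1 (hSA haS)
    have hac : a ≠ c := by rintro rfl; exact hal hl
    have hac' : a ≠ c + 2 := by rintro rfl; exact hr haS
    rw [mem_binomialSupport] at hia
    omega
  · refine xv_mem_generatorPool (Finset.mem_Icc.2 (by omega)) fun a haS hal har hia ↦ ?_
    have ha' := mem_Aset'.1 (hSA haS)
    have hac : a ≠ c := by rintro rfl; exact har hr
    have hac' : a ≠ c - 2 := by rintro rfl; exact hl haS
    rw [mem_binomialSupport] at hia
    omega
  · refine pv_mem_generatorPool ?_ hl hr
    have hpair := hFib ((c - 3) / 2) (by omega) (by omega)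
    rw [show 2 * ((c - 3) / 2) + 1 = c - 2 by omega, show 2 * ((c - 3) / 2) + 3 = c by omega]
      at hpair
    exact hpair.resolve_left hl

theorem IsAdmissible.subset_generatorPool (hS : IsFib n S)
    {B : Finset (MvPolynomial (Fin (2 * n + 1)) ℂ)} (hB : IsAdmissible n S B) :
    (B : Set _) ⊆ generatorPool n S := by
  obtain ⟨U2, U3, hU2, hU3, rfl⟩ := hB
  have hU4 : (U4 n S : Set _) ⊆ generatorPool n S := by
    rw [U4, Finset.coe_biUnion]
    exact Set.iUnion₂_subset fun c hc ↦ hS.Tpart_subset_generatorPool hc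
  simp only [Finset.coe_union, Set.union_subset_iff]
  exact ⟨⟨⟨U1_subset_generatorPool hS.1, hU2.subset_generatorPool hS.1⟩,
    hU3.subset_generatorPool hS.1⟩, hU4⟩

theorem isPrimeCompleteIntersection_of_subset_generatorPool (hS : S ⊆ Aset' n)
    {B : Finset (MvPolynomial (Fin (2 * n + 1)) ℂ)} (hB : (B : Set _) ⊆ generatorPool n S) :
    IsPrimeCompleteIntersection (B : Set (MvPolynomial (Fin (2 * n + 1)) ℂ)) := by
  classical
  let I := (freeIndices n S).filter (xv n · ∈ B)
  let P := (isolated S).filter (pv n · ∈ B)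
  have hBIP : (B : Set (MvPolynomial (Fin (2 * n + 1)) ℂ)) = xv n '' I ∪ pv n '' P := by
    ext f
    constructor
    · intro hf
      rcases hB hf with ⟨i, hi, rfl⟩ | ⟨a, ha, rfl⟩
      · exact .inl ⟨i, Finset.mem_filter.2 ⟨hi, hf⟩, rfl⟩
      · exact .inr ⟨a, Finset.mem_filter.2 ⟨ha, hf⟩, rfl⟩
    · rintro (⟨i, hi, rfl⟩ | ⟨a, ha, rfl⟩)
      · exact (Finset.mem_filter.1 hi).2
      · exact (Finset.mem_filter.1 ha).2
  have hI : I ⊆ freeIndices n S := Finset.filter_subset _ _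
  have hP : P ⊆ isolated S := Finset.filter_subset _ _
  rw [hBIP]
  refine isPrimeCompleteIntersection_generators (hI.trans (Finset.filter_subset _ _))
    ((hP.trans (Finset.filter_subset _ _)).trans hS) ?_ ?_
  · exact fun a ha ↦ Finset.disjoint_right.2 fun i hi ↦
      (Finset.mem_filter.1 (hI hi)).2 a (hP ha)
  · exact fun a ha b hb ↦ add_four_le_of_mem_isolated hS (hP ha) (hP hb)

theorem generatorPool_subset_idealOfVars :
    generatorPool n S ⊆ idealOfVars (Fin (2 * n + 1)) ℂ := by
  have hx : ∀ i, xv n i ∈ idealOfVars (Fin (2 * n + 1)) ℂ := fun i ↦ Ideal.subset_span ⟨_, rfl⟩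
  rintro _ (⟨i, -, rfl⟩ | ⟨a, -, rfl⟩)
  · exact hx i
  · exact add_mem (Ideal.mul_mem_right _ _ (hx _)) (Ideal.mul_mem_right _ _ (hx _))

end Admissible

/-- For every `n ≥ 3`, every Fibonacci subset `S ∈ F_n`, and every `S`-admissible set `B`:
the ideal `I_B` generated by `B` in `ℂ[x₁,…,x_{2n+1}]` is prime; `B` is an irredundant
generating set of `I_B`; and the Krull dimension of `ℂ[x₁,…,x_{2n+1}]/I_B`
equals `2n+1 − |B|`. -/
theorem admissible_prime_irredundant_dim (n : ℕ) (hn : 3 ≤ n) (S : Finset ℕ)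
    (hS : IsFib n S) (B : Finset (MvPolynomial (Fin (2 * n + 1)) ℂ))
    (hB : IsAdmissible n S B) :
    (Ideal.span (B : Set (MvPolynomial (Fin (2 * n + 1)) ℂ))).IsPrime ∧
    (∀ B' ⊂ B, Ideal.span (B' : Set (MvPolynomial (Fin (2 * n + 1)) ℂ)) ≠
        Ideal.span (B : Set (MvPolynomial (Fin (2 * n + 1)) ℂ))) ∧
    ringKrullDim
        (MvPolynomial (Fin (2 * n + 1)) ℂ ⧸
          Ideal.span (B : Set (MvPolynomial (Fin (2 * n + 1)) ℂ))) =
      (2 * n + 1 - B.card : ℕ) := by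
  have hBpool := hB.subset_generatorPool hS
  have hBci := isPrimeCompleteIntersection_of_subset_generatorPool hS.1 hBpool
  have hdim := hBci.ringKrullDim_quotient_eq (hBpool.trans generatorPool_subset_idealOfVars)
  rw [Nat.card_fin] at hdim
  exact ⟨hBci.isPrime, fun B' hB' ↦ hBci.span_ne_of_ssubset hB', hdim⟩
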